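/- Let λ_s < 0 < λ_u, set μ := λ_u − λ_s, let ε, S ≥ 0, and let σ : ℝ → ℝ be continuous with |σ(τ)| ≤ εS for all τ ∈ ℝ. Define θ⋆(t,T) := e^{−μt} ∫_{−T}^t e^{μτ} σ(τ) dτ and θ(t) := e^{−μt} ∫_{−∞}^t e^{μτ} σ(τ) dτ. Then for every t ≥ −T, |θ⋆(t,T) − θ(t)| ≤ (εS/(λ_u − λ_s)) · e^{(λ_s − λ_u)(t+T)}. -/

import Mathlib

/-!
The clipped and the infinite-time angles differ by the tail `∫ τ in Iic (-T), e^{μτ} σ(τ)`, scaled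
by `e^{-μt}`. Comparison with `C e^{μτ}`, where `C` bounds `‖σ‖`, shows that the tail is at most
`(C / μ) e^{-μT}`.
-/

open MeasureTheory Set

section HalfLineIntegrals

variable {E : Type*} [NormedAddCommGroup E] [NormedSpace ℝ E] {f : ℝ → E} {μ C a b c : ℝ}

theorem integrableOn_exp_mul_smul_Iic (hμ : 0 < μ)
    (hf : AEStronglyMeasurable f (volume.restrict (Iic c)))
    (hC : ∀ᵐ x ∂volume.restrict (Iic c), ‖f x‖ ≤ C) :
    IntegrableOn (fun x ↦ Real.exp (μ * x) • f x) (Iic c) :=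
  Integrable.smul_bdd (integrableOn_exp_mul_Iic hμ c) C hf hC

theorem norm_integral_Iic_exp_mul_smul_le (hμ : 0 < μ)
    (hC : ∀ᵐ x ∂volume.restrict (Iic c), ‖f x‖ ≤ C) :
    ‖∫ x in Iic c, Real.exp (μ * x) • f x‖ ≤ C / μ * Real.exp (μ * c) := by
  have norm_le {x : ℝ} (hx : ‖f x‖ ≤ C) : ‖Real.exp (μ * x) • f x‖ ≤ Real.exp (μ * x) * C := by
    rw [norm_smul, Real.norm_eq_abs, Real.abs_exp]
    gcongr
  calc
    ‖∫ x in Iic c, Real.exp (μ * x) • f x‖ ≤ ∫ x in Iic c, Real.exp (μ * x) * C :=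
      norm_integral_le_of_norm_le ((integrableOn_exp_mul_Iic hμ c).mul_const C)
        (hC.mono fun _ ↦ norm_le)
    _ = C / μ * Real.exp (μ * c) := by
      rw [integral_mul_const, integral_exp_mul_Iic hμ]
      ring

theorem intervalIntegral_sub_integral_Iio
    (ha : IntegrableOn f (Iic a)) (hb : IntegrableOn f (Iic b)) :
    (∫ x in a..b, f x) - ∫ x in Iio b, f x = -∫ x in Iic a, f x := by
  rw [← integral_Iic_eq_integral_Iio, ← intervalIntegral.integral_Iic_sub_Iic ha hb,
    sub_sub_cancel_left]

end HalfLineIntegrals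

theorem finite_time_rotation_error_unstable_general
    {E : Type*} [NormedAddCommGroup E] [NormedSpace ℝ E] [CompleteSpace E]
    {μ C : ℝ} (hμ : 0 < μ) {σ : ℝ → E} (hσ : AEStronglyMeasurable σ)
    (hC : ∀ᵐ τ, ‖σ τ‖ ≤ C) (T t : ℝ) :
    ‖(Real.exp (-μ * t) • ∫ τ in (-T)..t, Real.exp (μ * τ) • σ τ)
        - Real.exp (-μ * t) • ∫ τ in Iio t, Real.exp (μ * τ) • σ τ‖
      ≤ C / μ * Real.exp (-μ * (t + T)) := by
  have integrable_past (c : ℝ) : IntegrableOn (fun τ ↦ Real.exp (μ * τ) • σ τ) (Iic c) :=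
    integrableOn_exp_mul_smul_Iic hμ hσ.restrict (ae_restrict_of_ae hC)
  rw [← smul_sub, intervalIntegral_sub_integral_Iio (integrable_past (-T)) (integrable_past t),
    norm_smul, norm_neg, Real.norm_eq_abs, Real.abs_exp]
  calc
    Real.exp (-μ * t) * ‖∫ τ in Iic (-T), Real.exp (μ * τ) • σ τ‖
      ≤ Real.exp (-μ * t) * (C / μ * Real.exp (μ * -T)) := by
        gcongr
        exact norm_integral_Iic_exp_mul_smul_le hμ (ae_restrict_of_ae hC)
    _ = C / μ * Real.exp (-μ * (t + T)) := by
        rw [mul_left_comm, ← Real.exp_add]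
        ring_nf

/-- Unstable-manifold part of the finite-time error estimate (eq:finitebound):
with eigenvalue gap `μ = λ_u − λ_s > 0` and shear `σ` bounded by `εS`, the clipped
rotation angle `θ⋆(t,T)` differs from the infinite-time rotation angle `θ(t)` by at
most `(εS/(λ_u − λ_s)) e^{(λ_s−λ_u)(t+T)}` for `t ≥ −T`. -/
theorem finite_time_rotation_error_unstable
    (ls lu ε S : ℝ) (hls : ls < 0) (hlu : 0 < lu) (hε : 0 ≤ ε) (hS : 0 ≤ S)
    (σ : ℝ → ℝ) (hσ : Continuous σ) (hb : ∀ τ : ℝ, |σ τ| ≤ ε * S)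
    (T : ℝ) :
    ∀ t : ℝ, -T ≤ t →
      |(Real.exp (-(lu - ls) * t) * ∫ τ in (-T)..t, Real.exp ((lu - ls) * τ) * σ τ)
        - (Real.exp (-(lu - ls) * t) *
            ∫ τ in Set.Iio t, Real.exp ((lu - ls) * τ) * σ τ)|
      ≤ ε * S / (lu - ls) * Real.exp ((ls - lu) * (t + T)) := by
  intro t _
  simpa only [smul_eq_mul, Real.norm_eq_abs, neg_sub] using
    finite_time_rotation_error_unstable_general (sub_pos.2 (hls.trans hlu))
      hσ.aestronglyMeasurable (.of_forall hb) T t
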